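/- Let ρ̄ be a probability density on 𝕋^d and φ a bounded measurable function on 𝕋^{3d} satisfying both cancellations ∫ φ(x,z,z') ρ̄(x) dx = 0 for all z,z' and ∫∫ φ(x,z,z') ρ̄(z)ρ̄(z') dz dz' = 0 for all x, and suppose sup_{p≥1} M_p/p < 1/(6e^2), where M_p = ‖sup_{z,z'}|φ(·,z,z')|‖_{L^p(ρ̄ dx)}. Then ∫_{𝕋^{dN}} ρ̄^{⊗N} exp( N^{−2} ∑_{i,j,k=1}^N φ(x_i,x_j,x_k) ) dX ≤ 2( 1 + 4α/(1−α)^3 + 1/(1−β) ), where α = (√(32e^3) sup_{p≥1} M_p/p)^2 < 1 and β = (3e^2 sup_{p≥1} M_p/p)^2 < 1, uniformly in N. -/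

import Mathlib

open MeasureTheory

/-- The `d`-dimensional torus `𝕋^d = [0,1]^d`. -/
abbrev Torus (d : ℕ) := Fin d → AddCircle (1 : ℝ)

/-- `M_p = ‖ sup_{z,z'} |φ(·,z,z')| ‖_{L^p(ρ̄ dx)}`. -/
noncomputable def Mp {d : ℕ} (ρ : Torus d → ℝ) (φ : Torus d → Torus d → Torus d → ℝ)
    (p : ℝ) : ℝ :=
  (∫ x : Torus d, (⨆ z, ⨆ z', |φ x z z'|) ^ p * ρ x) ^ (1 / p)

/-- `sup_{p ≥ 1} M_p / p`. -/
noncomputable def Msup {d : ℕ} (ρ : Torus d → ℝ)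
    (φ : Torus d → Torus d → Torus d → ℝ) : ℝ :=
  ⨆ p : {p : ℝ // 1 ≤ p}, Mp ρ φ (p : ℝ) / (p : ℝ)

/-!
Let `F x = sup_{z,z'} |φ(x,z,z')|` and let `S = sup_p M_p/p`. The right-hand side of the theorem is
at least `2`, and the exponential moment is in fact at most `2`.

Since `∫ F^k ρ̄ ≤ (k S)^k`, the exponential series gives `∫ (exp (6F) - 1 - 6F) ρ̄ ≤ 3/8` and
`∫ exp (6F) ρ̄ ≤ 2`. Triples with a repeated index contribute at most `3 N⁻¹ ∑ F(x_i)` to the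
exponent, so by AM-GM and Jensen it suffices to bound by `2` the exponential moment of twice the sum
over triples of distinct indices. By Hoeffding's representation of U-statistics, that sum is an
average over permutations of the indices of sums `∑_a f_ζ(x_a)` with `n = ⌊N/3⌋` terms, where
`f_ζ(x)` is the mean of `n` values `t φ(x, ζ_b)` with `t ≤ 6`, at pairs `ζ_b` independent of the
points `x_a`; by Jensen only one such block sum matters.

For fixed `ζ` the function `f_ζ` is centred by the first cancellation and bounded by `6F`. Put
`w = exp (6F) - 1 - 6F` and `r = 3/8`. Then `exp f ≤ 1 + f + w (f/(6F))²`, and Jensen for the weight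
`w/r` reduces the problem to the expectation over `ζ` of `exp (n r (f_ζ(x)/(6F(x)))²)` at fixed `x`.
By the second cancellation `f_ζ(x)/(6F(x))` is a mean of `n` independent centred variables bounded
by one, so Hoeffding's lemma and Gaussian linearisation of the square bound this expectation by
`(1 - 2r)^(-1/2) = 2`.

As a supremum over an uncountable family, `F` need not be Borel; it is almost everywhere measurable
because its superlevel sets are projections of Borel sets, hence analytic, and analytic sets are
null-measurable for every finite Borel measure.
-/

section AnalyticSets

open Filter Topology
open scoped ENNReal

variable {α : Type*} [MeasurableSpace α]

lemma exists_forall_lt_measure_image_prefixBox (μ : Measure α) (f : (ℕ → ℕ) → α) {c : ℝ≥0∞}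
    (hc : c < μ (Set.range f)) :
    ∃ n : ℕ → ℕ, ∀ k, c < μ (f '' {x | ∀ i < k, x i ≤ n i}) := by
  have refine_coordinate (k : ℕ) (T : {T : Set (ℕ → ℕ) // c < μ (f '' T)}) :
      ∃ j, c < μ (f '' (T ∩ {x | x k ≤ j})) := by
    obtain ⟨T, hT⟩ := T
    have hcover : f '' T = ⋃ j, f '' (T ∩ {x | x k ≤ j}) := by
      rw [← Set.image_iUnion, ← Set.inter_iUnion,
        Set.iUnion_eq_univ_iff.2 fun x => ⟨x k, le_refl (x k)⟩, Set.inter_univ]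
    have hmono : Monotone fun j => f '' (T ∩ {x | x k ≤ j}) := fun i j hij =>
      Set.image_mono fun x hx => ⟨hx.1, hx.2.trans hij⟩
    rw [hcover, hmono.measure_iUnion] at hT
    exact lt_iSup_iff.1 hT
  choose bound hbound using refine_coordinate
  let T (k : ℕ) : {T : Set (ℕ → ℕ) // c < μ (f '' T)} :=
    k.rec ⟨Set.univ, by rwa [Set.image_univ]⟩ fun k T => ⟨_, hbound k T⟩
  refine ⟨fun k => bound k (T k), fun k => ?_⟩
  suffices hT : (T k).1 = {x | ∀ i < k, x i ≤ bound i (T i)} from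
    hT ▸ (T k).2
  induction k with
  | zero => simp [T]
  | succ k ih =>
    change (T k).1 ∩ {x | x k ≤ bound k (T k)} = _
    rw [ih]
    ext x
    simp only [Set.mem_inter_iff, Set.mem_ofPred_eq, Nat.forall_lt_succ_right]

lemma exists_prefixBox_subset {n : ℕ → ℕ} {U : Set (ℕ → ℕ)} (hU : IsOpen U)
    (hn : Set.Iic n ⊆ U) : ∃ k, {x : ℕ → ℕ | ∀ i < k, x i ≤ n i} ⊆ U := by
  by_contra! hnot
  choose x hx hxU using fun k => Set.not_subset.1 (hnot k)
  have hcompact : IsCompact (Set.Iic n) := Set.Icc_bot (a := n) ▸ isCompact_Icc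
  obtain ⟨z, hz, ψ, hψ, hlim⟩ :=
    hcompact.tendsto_subseq fun k => (inf_le_right : x k ⊓ n ≤ n)
  have hlim' : Tendsto (x ∘ ψ) atTop (𝓝 z) := by
    rw [tendsto_pi_nhds] at hlim ⊢
    refine fun i => (hlim i).congr' ?_
    filter_upwards [eventually_gt_atTop i] with k hk
    exact min_eq_left (hx (ψ k) i (hk.trans_le hψ.le_apply))
  obtain ⟨k, hk⟩ := (hlim'.eventually (hU.mem_nhds (hn hz))).exists
  exact hxU _ hk

variable [TopologicalSpace α]

lemma exists_isCompact_subset_range_le_measure (μ : Measure α) [μ.OuterRegular]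
    {f : (ℕ → ℕ) → α} (hf : Continuous f) {c : ℝ≥0∞} (hc : c < μ (Set.range f)) :
    ∃ K ⊆ Set.range f, IsCompact K ∧ c ≤ μ K := by
  obtain ⟨n, hn⟩ := exists_forall_lt_measure_image_prefixBox μ f hc
  have hcompact : IsCompact (Set.Iic n) := Set.Icc_bot (a := n) ▸ isCompact_Icc
  refine ⟨f '' Set.Iic n, Set.image_subset_range _ _, hcompact.image hf, ?_⟩
  rw [Set.measure_eq_iInf_isOpen]
  refine le_iInf₂ fun U hU => le_iInf fun hUo => ?_
  obtain ⟨k, hk⟩ := exists_prefixBox_subset (hUo.preimage hf) (Set.image_subset_iff.1 hU)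
  exact (hn k).le.trans (measure_mono (Set.image_subset_iff.2 hk))

lemma nullMeasurableSet_of_analyticSet [T2Space α] [OpensMeasurableSpace α] (μ : Measure α)
    [IsFiniteMeasure μ] [μ.OuterRegular] {s : Set α} (hs : AnalyticSet s) :
    NullMeasurableSet s μ := by
  rw [AnalyticSet] at hs
  obtain rfl | ⟨f, hf, rfl⟩ := hs
  · exact nullMeasurableSet_empty
  by_cases h0 : μ (Set.range f) = 0
  · exact NullMeasurableSet.of_null h0
  obtain ⟨c, -, hc, hlim⟩ := exists_seq_strictMono_tendsto' (pos_iff_ne_zero.2 h0)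
  choose K hKf hK hcK using
    fun k => exists_isCompact_subset_range_le_measure μ hf (hc k).2
  have hmeas : MeasurableSet (⋃ k, K k) := .iUnion fun k => (hK k).measurableSet
  have hle : μ (Set.range f) ≤ μ (⋃ k, K k) :=
    le_of_tendsto' hlim fun k => (hcK k).trans (measure_mono (Set.subset_iUnion K k))
  exact hmeas.nullMeasurableSet.congr <| ae_eq_of_subset_of_measure_ge (Set.iUnion_subset hKf)
    hle hmeas.nullMeasurableSet (measure_ne_top _ _)

lemma aemeasurable_ciSup_of_measurable_uncurry {Ω E : Type*} [MeasurableSpace Ω]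
    [StandardBorelSpace Ω] [MeasurableSpace E] [StandardBorelSpace E] [Nonempty E]
    (μ : Measure Ω) [IsFiniteMeasure μ] {f : Ω → E → ℝ} (hf : Measurable (Function.uncurry f))
    (hbdd : ∀ x, BddAbove (Set.range (f x))) : AEMeasurable (fun x => ⨆ y, f x y) μ := by
  let := upgradeStandardBorel Ω
  refine NullMeasurable.aemeasurable (measurable_of_Ioi fun a => ?_)
  have hproj : (fun x => ⨆ y, f x y) ⁻¹' Set.Ioi a =
      Prod.fst '' (Function.uncurry f ⁻¹' Set.Ioi a) := by
    ext x
    simp [lt_ciSup_iff (hbdd x)]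
  change NullMeasurableSet ((fun x => ⨆ y, f x y) ⁻¹' Set.Ioi a) μ
  rw [hproj]
  exact nullMeasurableSet_of_analyticSet μ
    ((hf measurableSet_Ioi).analyticSet_image measurable_fst)

end AnalyticSets

section Gaussian

open ProbabilityTheory
open scoped NNReal

lemma integral_exp_mul_sq_gaussianReal {a : ℝ} {v : ℝ≥0} (h : 2 * a * v < 1) :
    ∫ x, Real.exp (a * x ^ 2) ∂gaussianReal 0 v = (√(1 - 2 * a * v))⁻¹ := by
  obtain rfl | hv := eq_or_ne v 0
  · simp
  have : (0 : ℝ) < v := by positivity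
  set b : ℝ := (1 - 2 * a * v) / (2 * v) with hb
  have : 0 < b := div_pos (by linarith) (by positivity)
  have hdensity (x : ℝ) : gaussianPDFReal 0 v x • Real.exp (a * x ^ 2) =
      (√(2 * Real.pi * v))⁻¹ * Real.exp (-b * x ^ 2) := by
    rw [gaussianPDFReal, smul_eq_mul, mul_assoc, ← Real.exp_add, hb]
    congr 2
    field_simp
    ring
  simp_rw [integral_gaussianReal_eq_integral_smul hv, hdensity]
  rw [integral_const_mul, integral_gaussian, ← Real.sqrt_inv, ← Real.sqrt_inv,
    ← Real.sqrt_mul (by positivity), hb]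
  congr 1
  have : 1 - 2 * a * v ≠ 0 := by linarith
  field_simp

lemma integrable_exp_mul_sq_gaussianReal {a : ℝ} {v : ℝ≥0} (h : 2 * a * v < 1) :
    Integrable (fun x => Real.exp (a * x ^ 2)) (gaussianReal 0 v) := by
  refine Integrable.of_integral_ne_zero ?_
  rw [integral_exp_mul_sq_gaussianReal h]
  exact inv_ne_zero (Real.sqrt_pos.2 (by linarith)).ne'

lemma exp_mul_sq_eq_lintegral_gaussianReal (s : ℝ≥0) (t : ℝ) :
    ENNReal.ofReal (Real.exp (s * t ^ 2)) =
      ∫⁻ g, ENNReal.ofReal (Real.exp (t * g)) ∂gaussianReal 0 (2 * s) := by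
  rw [← ofReal_integral_eq_lintegral_ofReal (integrable_exp_mul_gaussianReal t)
    (ae_of_all _ fun _ => (Real.exp_pos _).le)]
  have hmgf := congrFun (mgf_id_gaussianReal (μ := 0) (v := 2 * s)) t
  simp only [mgf, id] at hmgf
  rw [hmgf]
  push_cast
  ring_nf

lemma integral_exp_mul_sq_le_of_hasSubgaussianMGF {Ω : Type*} [MeasurableSpace Ω]
    {μ : Measure Ω} [SFinite μ] {X : Ω → ℝ} {c s : ℝ≥0} (hX : HasSubgaussianMGF X c μ)
    (hsc : 2 * (s : ℝ) * c < 1) :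
    ∫ ω, Real.exp (s * X ω ^ 2) ∂μ ≤ (√(1 - 2 * s * c))⁻¹ := by
  have hXm : AEMeasurable X μ := hX.aemeasurable
  have hg : 2 * ((c : ℝ) / 2) * (2 * s : ℝ≥0) < 1 := by push_cast; linarith
  have hmgf (g : ℝ) : ∫⁻ ω, ENNReal.ofReal (Real.exp (X ω * g)) ∂μ ≤
      ENNReal.ofReal (Real.exp (c / 2 * g ^ 2)) := by
    simp_rw [mul_comm (X _)]
    rw [← ofReal_integral_eq_lintegral_ofReal (hX.integrable_exp_mul g)
      (ae_of_all _ fun _ => (Real.exp_pos _).le)]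
    refine ENNReal.ofReal_le_ofReal ((hX.mgf_le g).trans_eq ?_)
    ring_nf
  rw [integral_eq_lintegral_of_nonneg_ae (ae_of_all _ fun _ => (Real.exp_pos _).le)
    (by fun_prop)]
  refine ENNReal.toReal_le_of_le_ofReal (by positivity) ?_
  calc ∫⁻ ω, ENNReal.ofReal (Real.exp (s * X ω ^ 2)) ∂μ
    _ = ∫⁻ g, ∫⁻ ω, ENNReal.ofReal (Real.exp (X ω * g)) ∂μ ∂gaussianReal 0 (2 * s) := by
      simp_rw [exp_mul_sq_eq_lintegral_gaussianReal]
      exact lintegral_lintegral_swap (by fun_prop)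
    _ ≤ ∫⁻ g, ENNReal.ofReal (Real.exp (c / 2 * g ^ 2)) ∂gaussianReal 0 (2 * s) :=
      lintegral_mono hmgf
    _ = ENNReal.ofReal (√(1 - 2 * s * c))⁻¹ := by
      rw [← ofReal_integral_eq_lintegral_ofReal (integrable_exp_mul_sq_gaussianReal hg)
        (ae_of_all _ fun _ => (Real.exp_pos _).le), integral_exp_mul_sq_gaussianReal hg]
      push_cast
      ring_nf

lemma hasSubgaussianMGF_one_of_abs_le_one {E : Type*} [MeasurableSpace E] {μ : Measure E}
    [IsProbabilityMeasure μ] {f : E → ℝ} (hf : AEMeasurable f μ) (hf1 : ∀ᵐ x ∂μ, |f x| ≤ 1)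
    (hf0 : ∫ x, f x ∂μ = 0) : HasSubgaussianMGF f 1 μ := by
  have h := hasSubgaussianMGF_of_mem_Icc_of_integral_eq_zero (a := -1) (b := 1) hf
    (hf1.mono fun x hx => abs_le.1 hx) hf0
  have hc : (‖(1 : ℝ) - -1‖₊ / 2) ^ 2 = 1 := by
    ext
    push_cast
    norm_num
  rwa [hc] at h

lemma integral_exp_mul_sum_sq_le {ι E : Type*} [Fintype ι] [Nonempty ι] [MeasurableSpace E]
    {μ : Measure E} [IsProbabilityMeasure μ] {f : E → ℝ} (hf : AEMeasurable f μ)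
    (hf1 : ∀ᵐ x ∂μ, |f x| ≤ 1) (hf0 : ∫ x, f x ∂μ = 0) {r : ℝ} (hr0 : 0 ≤ r) (hr : 2 * r < 1) :
    ∫ ζ : ι → E, Real.exp (r / Fintype.card ι * (∑ b, f (ζ b)) ^ 2) ∂Measure.pi (fun _ => μ) ≤
      (√(1 - 2 * r))⁻¹ := by
  have hsub (b : ι) : HasSubgaussianMGF (fun ζ : ι → E => f (ζ b)) 1 (Measure.pi fun _ => μ) := by
    have heval := measurePreserving_eval (fun _ : ι => μ) b
    refine HasSubgaussianMGF.of_map heval.measurable.aemeasurable ?_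
    rw [heval.map_eq]
    exact hasSubgaussianMGF_one_of_abs_le_one hf hf1 hf0
  have hindep : iIndepFun (fun (b : ι) (ζ : ι → E) => f (ζ b)) (Measure.pi fun _ => μ) :=
    iIndepFun_pi fun _ => hf
  have hsum := HasSubgaussianMGF.sum_of_iIndepFun hindep (s := Finset.univ) fun b _ => hsub b
  have : (0 : ℝ) < Fintype.card ι := by exact_mod_cast Fintype.card_pos
  lift r to ℝ≥0 using hr0
  have h := integral_exp_mul_sq_le_of_hasSubgaussianMGF (s := r / Fintype.card ι) hsum (by
    push_cast
    simp only [Finset.sum_const, Finset.card_univ, nsmul_eq_mul, mul_one]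
    field_simp
    exact hr)
  push_cast at h
  simp only [Finset.sum_const, Finset.card_univ, nsmul_eq_mul, mul_one] at h
  refine h.trans_eq ?_
  field_simp

end Gaussian

section CenteredKernels

lemma hasSum_exp_sub_one_sub (x : ℝ) :
    HasSum (fun n : ℕ => x ^ (n + 2) / (n + 2).factorial) (Real.exp x - 1 - x) := by
  have hexp : HasSum (fun n : ℕ => x ^ n / n.factorial) (Real.exp x) :=
    Real.exp_eq_exp_ℝ ▸ NormedSpace.expSeries_div_hasSum_exp x
  simpa [Finset.sum_range_succ, sub_sub] using (hasSum_nat_add_iff' 2).2 hexp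

lemma exp_le_one_add_add_sq_div_mul {u w : ℝ} (h : |u| ≤ w) :
    Real.exp u ≤ 1 + u + (u / w) ^ 2 * (Real.exp w - 1 - w) := by
  have hw : 0 ≤ w := (abs_nonneg u).trans h
  obtain rfl | hw0 := hw.eq_or_lt
  · simp [abs_nonpos_iff.1 h]
  have hle := hasSum_le (fun n => ?_) (hasSum_exp_sub_one_sub u)
    ((hasSum_exp_sub_one_sub w).mul_left ((u / w) ^ 2))
  · linarith
  have hpow : u ^ n ≤ w ^ n :=
    (le_abs_self _).trans (abs_pow u n ▸ pow_le_pow_left₀ (abs_nonneg u) h n)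
  calc u ^ (n + 2) / (n + 2).factorial
    _ = u ^ 2 / (n + 2).factorial * u ^ n := by ring
    _ ≤ u ^ 2 / (n + 2).factorial * w ^ n := by gcongr
    _ = (u / w) ^ 2 * (w ^ (n + 2) / (n + 2).factorial) := by
      field_simp
      ring

/-- The density `(exp F - 1 - F) / r`, against which the quadratic term of a centred exponential
moment is averaged; its mass is at most one when `∫ (exp F - 1 - F) ≤ r`. -/
noncomputable def remainderWeight {α : Type*} (F : α → ℝ) (r : ℝ) (x : α) : ℝ :=
  (Real.exp (F x) - 1 - F x) / r

lemma remainderWeight_nonneg {α : Type*} {F : α → ℝ} {r : ℝ} (hr : 0 ≤ r) (x : α) :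
    0 ≤ remainderWeight F r x :=
  div_nonneg (by linarith [Real.add_one_le_exp (F x)]) hr

variable {Ω : Type*} [MeasurableSpace Ω] {μ : Measure Ω} {f F w : Ω → ℝ}

lemma integrable_of_integrable_exp (hF0 : ∀ x, 0 ≤ F x)
    (hF : Integrable (fun x => Real.exp (F x)) μ) : Integrable F μ := by
  have hFm : AEMeasurable F μ := Real.aemeasurable_of_aemeasurable_exp hF.aemeasurable
  refine hF.mono' hFm.aestronglyMeasurable (ae_of_all _ fun x => ?_)
  rw [Real.norm_of_nonneg (hF0 x)]
  linarith [Real.add_one_le_exp (F x)]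

lemma exp_integral_mul_le (hw0 : ∀ x, 0 ≤ w x) (hw : Integrable w μ) (hw1 : ∫ x, w x ∂μ ≤ 1)
    (hwf : Integrable (fun x => w x * f x) μ)
    (hwexp : Integrable (fun x => w x * Real.exp (f x)) μ) :
    Real.exp (∫ x, w x * f x ∂μ) ≤
      1 - ∫ x, w x ∂μ + ∫ x, w x * Real.exp (f x) ∂μ := by
  set t := ∫ x, w x * f x ∂μ
  have htangent : Real.exp t * ((1 - t) * ∫ x, w x ∂μ + t) ≤ ∫ x, w x * Real.exp (f x) ∂μ := by
    rw [← integral_const_mul, ← integral_add (hw.const_mul _) hwf, ← integral_const_mul]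
    refine integral_mono (((hw.const_mul _).add hwf).const_mul _) hwexp fun x => ?_
    calc Real.exp t * ((1 - t) * w x + w x * f x)
      _ = w x * (Real.exp t * (f x - t + 1)) := by ring
      _ ≤ w x * (Real.exp t * Real.exp (f x - t)) := by
        have := hw0 x
        gcongr
        exact Real.add_one_le_exp _
      _ = w x * Real.exp (f x) := by rw [← Real.exp_add, add_sub_cancel]
  have hone : Real.exp t * (1 - t) ≤ 1 := by
    calc Real.exp t * (1 - t)
      _ ≤ Real.exp t * Real.exp (-t) := by
        gcongr
        linarith [Real.add_one_le_exp (-t)]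
      _ = 1 := by rw [← Real.exp_add, add_neg_cancel, Real.exp_zero]
  nlinarith

lemma integral_remainderWeight_le_one {r : ℝ} (hr0 : 0 ≤ r)
    (hr : ∫ x, (Real.exp (F x) - 1 - F x) ∂μ ≤ r) : ∫ x, remainderWeight F r x ∂μ ≤ 1 := by
  simp_rw [remainderWeight]
  rw [integral_div]
  exact div_le_one_of_le₀ hr hr0

variable [IsProbabilityMeasure μ]

lemma integral_exp_le_exp_integral_of_abs_le (hf : AEMeasurable f μ) (hfF : ∀ x, |f x| ≤ F x)
    (hF : Integrable (fun x => Real.exp (F x)) μ) (hf0 : ∫ x, f x ∂μ = 0) :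
    ∫ x, Real.exp (f x) ∂μ ≤
      Real.exp (∫ x, (Real.exp (F x) - 1 - F x) * (f x / F x) ^ 2 ∂μ) := by
  have hF0 (x : Ω) : 0 ≤ F x := (abs_nonneg _).trans (hfF x)
  have hFi : Integrable F μ := integrable_of_integrable_exp hF0 hF
  have hfi : Integrable f μ := hFi.mono' hf.aestronglyMeasurable (ae_of_all _ hfF)
  have hratio : Integrable (fun x => (Real.exp (F x) - 1 - F x) * (f x / F x) ^ 2) μ := by
    refine ((hF.sub (integrable_const 1)).sub hFi).mul_bdd (c := 1)
      ((hf.div hFi.aemeasurable).pow_const 2).aestronglyMeasurable (ae_of_all _ fun x => ?_)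
    rw [norm_pow, Real.norm_eq_abs, abs_div, abs_of_nonneg (hF0 x)]
    exact pow_le_one₀ (by have := hF0 x; positivity) (div_le_one_of_le₀ (hfF x) (hF0 x))
  have hlin : Integrable (fun x => 1 + f x) μ := (integrable_const 1).add hfi
  calc ∫ x, Real.exp (f x) ∂μ
    _ ≤ ∫ x, 1 + f x + (Real.exp (F x) - 1 - F x) * (f x / F x) ^ 2 ∂μ := by
      refine integral_mono_of_nonneg (ae_of_all _ fun x => (Real.exp_pos _).le)
        (hlin.add hratio) (ae_of_all _ fun x => ?_)
      exact (exp_le_one_add_add_sq_div_mul (hfF x)).trans_eq (by ring)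
    _ = ∫ x, (Real.exp (F x) - 1 - F x) * (f x / F x) ^ 2 ∂μ + 1 := by
      rw [integral_add hlin hratio, integral_add (integrable_const 1) hfi, hf0]
      simp [add_comm]
    _ ≤ _ := Real.add_one_le_exp _

lemma integrable_remainderWeight (hF0 : ∀ x, 0 ≤ F x)
    (hF : Integrable (fun x => Real.exp (F x)) μ) (r : ℝ) :
    Integrable (remainderWeight F r) μ :=
  ((hF.sub (integrable_const 1)).sub (integrable_of_integrable_exp hF0 hF)).div_const r

lemma integral_exp_pow_le (hf : AEMeasurable f μ) (hfF : ∀ x, |f x| ≤ F x)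
    (hF : Integrable (fun x => Real.exp (F x)) μ) (hf0 : ∫ x, f x ∂μ = 0) {r : ℝ} (hr0 : 0 < r)
    (hr : ∫ x, (Real.exp (F x) - 1 - F x) ∂μ ≤ r) (n : ℕ) :
    (∫ x, Real.exp (f x) ∂μ) ^ n ≤ 1 - ∫ x, remainderWeight F r x ∂μ +
      ∫ x, remainderWeight F r x * Real.exp (n * r * (f x / F x) ^ 2) ∂μ := by
  have hF0 (x : Ω) : 0 ≤ F x := (abs_nonneg _).trans (hfF x)
  have hratio (x : Ω) : (f x / F x) ^ 2 ≤ 1 := by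
    rw [sq_le_one_iff_abs_le_one, abs_div, abs_of_nonneg (hF0 x)]
    exact div_le_one_of_le₀ (hfF x) (hF0 x)
  have hwi := integrable_remainderWeight hF0 hF r
  have hsqm : AEMeasurable (fun x => n * r * (f x / F x) ^ 2) μ :=
    ((hf.div (Real.aemeasurable_of_aemeasurable_exp hF.aemeasurable)).pow_const 2).const_mul _
  have hsqle (x : Ω) : n * r * (f x / F x) ^ 2 ≤ n * r :=
    mul_le_of_le_one_right (by positivity) (hratio x)
  calc (∫ x, Real.exp (f x) ∂μ) ^ n
    _ ≤ Real.exp (∫ x, (Real.exp (F x) - 1 - F x) * (f x / F x) ^ 2 ∂μ) ^ n :=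
      pow_le_pow_left₀ (integral_nonneg fun _ => (Real.exp_pos _).le)
        (integral_exp_le_exp_integral_of_abs_le hf hfF hF hf0) n
    _ = Real.exp (∫ x, remainderWeight F r x * (n * r * (f x / F x) ^ 2) ∂μ) := by
      rw [← Real.exp_nat_mul, ← integral_const_mul]
      congr 1
      refine integral_congr_ae (ae_of_all _ fun x => ?_)
      simp only [remainderWeight]
      field_simp
    _ ≤ _ := by
      refine exp_integral_mul_le (remainderWeight_nonneg hr0.le) hwi
        (integral_remainderWeight_le_one hr0.le hr)
        (hwi.mul_bdd (c := n * r) hsqm.aestronglyMeasurable (ae_of_all _ fun x => ?_))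
        (hwi.mul_bdd (c := Real.exp (n * r)) hsqm.exp.aestronglyMeasurable
          (ae_of_all _ fun x => ?_))
      · rw [Real.norm_of_nonneg (by positivity)]
        exact hsqle x
      · rw [Real.norm_of_nonneg (Real.exp_pos _).le, Real.exp_le_exp]
        exact hsqle x

end CenteredKernels

section TwoSample

variable {Ω E ι : Type*} [Fintype ι]

/-- The kernel `φ` averaged over a sample `ζ` of its second variable. -/
noncomputable def sampleMean (φ : Ω → E → ℝ) (ζ : ι → E) (x : Ω) : ℝ :=
  (Fintype.card ι : ℝ)⁻¹ * ∑ b, φ x (ζ b)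

lemma abs_sampleMean_le [Nonempty ι] {φ : Ω → E → ℝ} {F : Ω → ℝ} (hφF : ∀ x y, |φ x y| ≤ F x)
    (ζ : ι → E) (x : Ω) : |sampleMean φ ζ x| ≤ F x := by
  rw [sampleMean, abs_mul, abs_inv, Nat.abs_cast,
    inv_mul_le_iff₀ (by exact_mod_cast Fintype.card_pos), ← nsmul_eq_mul]
  exact (Finset.abs_sum_le_sum_abs _ _).trans (Finset.sum_le_card_nsmul _ _ _ fun b _ => hφF x _)

variable [MeasurableSpace Ω]

lemma integral_sampleMean_eq_zero {μ : Measure Ω} {φ : Ω → E → ℝ}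
    (hφ : ∀ y, Integrable (fun x => φ x y) μ) (hφ0 : ∀ y, ∫ x, φ x y ∂μ = 0) (ζ : ι → E) :
    ∫ x, sampleMean φ ζ x ∂μ = 0 := by
  simp_rw [sampleMean]
  rw [integral_const_mul, integral_finsetSum _ fun b _ => hφ (ζ b)]
  simp [hφ0]

lemma integral_exp_sum_sampleMean_eq {μ : Measure Ω} [SigmaFinite μ] (φ : Ω → E → ℝ)
    (ζ : ι → E) :
    ∫ x : ι → Ω, Real.exp (∑ a, sampleMean φ ζ (x a)) ∂Measure.pi (fun _ => μ) =
      (∫ x, Real.exp (sampleMean φ ζ x) ∂μ) ^ Fintype.card ι := by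
  simp_rw [Real.exp_sum]
  exact integral_fintype_prod_eq_pow fun x => Real.exp (sampleMean φ ζ x)

variable [MeasurableSpace E]

lemma measurable_sampleMean {φ : Ω → E → ℝ} (hφ : Measurable (Function.uncurry φ)) :
    Measurable fun p : (ι → E) × Ω => sampleMean φ p.1 p.2 :=
  (Finset.measurable_sum _ fun b _ => show Measurable fun p : (ι → E) × Ω => φ p.2 (p.1 b) from
    hφ.comp (by fun_prop : Measurable fun p : (ι → E) × Ω => (p.2, p.1 b))).const_mul _

lemma integral_exp_mul_sampleMean_div_sq_le [Nonempty ι] {ν : Measure E} [IsProbabilityMeasure ν]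
    {φ : Ω → E → ℝ} {F : Ω → ℝ} (hφ : Measurable (Function.uncurry φ))
    (hφF : ∀ x y, |φ x y| ≤ F x) (hφ0 : ∀ x, ∫ y, φ x y ∂ν = 0) {r : ℝ} (hr0 : 0 ≤ r)
    (hr : 2 * r < 1) (x : Ω) :
    ∫ ζ : ι → E, Real.exp (Fintype.card ι * r * (sampleMean φ ζ x / F x) ^ 2)
      ∂Measure.pi (fun _ => ν) ≤ (√(1 - 2 * r))⁻¹ := by
  have : (Fintype.card ι : ℝ) ≠ 0 := by exact_mod_cast Fintype.card_ne_zero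
  have hratio (y : E) : |φ x y / F x| ≤ 1 := by
    rw [abs_div]
    exact div_le_one_of_le₀ ((hφF x y).trans (le_abs_self _)) (abs_nonneg _)
  have hmeas : Measurable (fun y => φ x y / F x) := (hφ.comp measurable_prodMk_left).div_const _
  refine le_of_eq_of_le ?_ (integral_exp_mul_sum_sq_le (ι := ι) hmeas.aemeasurable
    (ae_of_all ν hratio) (by rw [integral_div, hφ0, zero_div]) hr0 hr)
  refine integral_congr_ae (ae_of_all _ fun ζ => ?_)
  simp only [sampleMean, ← Finset.sum_div]
  field_simp

variable {μ : Measure Ω} [IsProbabilityMeasure μ] {ν : Measure E} [IsProbabilityMeasure ν]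
  {φ : Ω → E → ℝ} {F : Ω → ℝ}

lemma integrable_exp_sum_sampleMean [Nonempty ι] (hφ : Measurable (Function.uncurry φ))
    (hφF : ∀ x y, |φ x y| ≤ F x) (hF : Integrable (fun x => Real.exp (F x)) μ) :
    Integrable (fun q : (ι → Ω) × (ι → E) => Real.exp (∑ a, sampleMean φ q.2 (q.1 a)))
      ((Measure.pi fun _ => μ).prod (Measure.pi fun _ => ν)) := by
  have hprod : Integrable (fun x : ι → Ω => ∏ a, Real.exp (F (x a))) (Measure.pi fun _ => μ) :=
    Integrable.fintype_prod fun _ => hF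
  have hmeas : Measurable fun q : (ι → Ω) × (ι → E) => ∑ a, sampleMean φ q.2 (q.1 a) :=
    Finset.measurable_sum _ fun a _ => (measurable_sampleMean hφ).comp
      (by fun_prop : Measurable fun q : (ι → Ω) × (ι → E) => (q.2, q.1 a))
  refine (hprod.comp_fst _).mono' hmeas.exp.aestronglyMeasurable (ae_of_all _ fun q => ?_)
  rw [Real.norm_of_nonneg (Real.exp_pos _).le, ← Real.exp_sum, Real.exp_le_exp]
  exact Finset.sum_le_sum fun a _ => (le_abs_self _).trans (abs_sampleMean_le hφF _ _)

lemma integrable_remainderWeight_mul_exp_sampleMean [Nonempty ι]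
    (hφ : Measurable (Function.uncurry φ)) (hφF : ∀ x y, |φ x y| ≤ F x) (hF0 : ∀ x, 0 ≤ F x)
    (hF : Integrable (fun x => Real.exp (F x)) μ) {r : ℝ} (hr0 : 0 ≤ r) :
    Integrable (fun p : (ι → E) × Ω => remainderWeight F r p.2 *
      Real.exp (Fintype.card ι * r * (sampleMean φ p.1 p.2 / F p.2) ^ 2))
      ((Measure.pi fun _ => ν).prod μ) := by
  have hFm : AEMeasurable F μ := Real.aemeasurable_of_aemeasurable_exp hF.aemeasurable
  refine ((integrable_remainderWeight hF0 hF r).comp_snd _).mul_bdd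
    (c := Real.exp (Fintype.card ι * r)) ((((measurable_sampleMean hφ).aemeasurable.div
      hFm.comp_snd).pow_const 2).const_mul _).exp.aestronglyMeasurable (ae_of_all _ fun p => ?_)
  rw [Real.norm_of_nonneg (Real.exp_pos _).le, Real.exp_le_exp]
  refine mul_le_of_le_one_right (by positivity) ?_
  rw [sq_le_one_iff_abs_le_one, abs_div, abs_of_nonneg (hF0 _)]
  exact div_le_one_of_le₀ (abs_sampleMean_le hφF _ _) (hF0 _)

lemma integral_integral_remainderWeight_mul_exp_le [Nonempty ι]
    (hφ : Measurable (Function.uncurry φ)) (hφF : ∀ x y, |φ x y| ≤ F x)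
    (hF : Integrable (fun x => Real.exp (F x)) μ)
    (hφ2 : ∀ x, ∫ y, φ x y ∂ν = 0) {r : ℝ} (hr0 : 0 ≤ r) (hr : 2 * r < 1) :
    ∫ ζ : ι → E, ∫ x, remainderWeight F r x *
        Real.exp (Fintype.card ι * r * (sampleMean φ ζ x / F x) ^ 2) ∂μ ∂Measure.pi (fun _ => ν) ≤
      (∫ x, remainderWeight F r x ∂μ) * (√(1 - 2 * r))⁻¹ := by
  have hF0 (x : Ω) : 0 ≤ F x := by
    obtain ⟨y⟩ := nonempty_of_isProbabilityMeasure ν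
    exact (abs_nonneg _).trans (hφF x y)
  have hint := integrable_remainderWeight_mul_exp_sampleMean (ι := ι) (ν := ν) hφ hφF hF0 hF hr0
  rw [integral_integral_swap hint, ← integral_mul_const]
  refine integral_mono hint.integral_prod_right
    ((integrable_remainderWeight hF0 hF r).mul_const _) fun x => ?_
  simp only [integral_const_mul]
  exact mul_le_mul_of_nonneg_left (integral_exp_mul_sampleMean_div_sq_le hφ hφF hφ2 hr0 hr x)
    (remainderWeight_nonneg hr0 x)

lemma integral_exp_sum_sampleMean_le [Nonempty ι] (hφ : Measurable (Function.uncurry φ))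
    (hφF : ∀ x y, |φ x y| ≤ F x) (hF : Integrable (fun x => Real.exp (F x)) μ)
    (hφ1 : ∀ y, ∫ x, φ x y ∂μ = 0) (hφ2 : ∀ x, ∫ y, φ x y ∂ν = 0) {r : ℝ} (hr0 : 0 < r)
    (hr : 2 * r < 1) (hFr : ∫ x, (Real.exp (F x) - 1 - F x) ∂μ ≤ r) :
    ∫ q : (ι → Ω) × (ι → E), Real.exp (∑ a, sampleMean φ q.2 (q.1 a))
      ∂(Measure.pi fun _ => μ).prod (Measure.pi fun _ => ν) ≤ (√(1 - 2 * r))⁻¹ := by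
  have hF0 (x : Ω) : 0 ≤ F x := by
    obtain ⟨y⟩ := nonempty_of_isProbabilityMeasure ν
    exact (abs_nonneg _).trans (hφF x y)
  have hφi (y : E) : Integrable (fun x => φ x y) μ :=
    (integrable_of_integrable_exp hF0 hF).mono'
      (hφ.comp measurable_prodMk_right).aestronglyMeasurable (ae_of_all _ fun x => hφF x y)
  have hL : 1 ≤ (√(1 - 2 * r))⁻¹ :=
    (one_le_inv₀ (Real.sqrt_pos.2 (by linarith))).2 (Real.sqrt_le_one.2 (by linarith))
  set L := (√(1 - 2 * r))⁻¹
  have hκ1 := integral_remainderWeight_le_one hr0.le hFr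
  set κ := ∫ x, remainderWeight F r x ∂μ
  set Q : (ι → E) → Ω → ℝ := fun ζ x => remainderWeight F r x *
    Real.exp (Fintype.card ι * r * (sampleMean φ ζ x / F x) ^ 2)
  have hQ : Integrable (fun ζ => ∫ x, Q ζ x ∂μ) (Measure.pi fun _ => ν) :=
    (integrable_remainderWeight_mul_exp_sampleMean hφ hφF hF0 hF hr0.le).integral_prod_left
  calc ∫ q : (ι → Ω) × (ι → E), Real.exp (∑ a, sampleMean φ q.2 (q.1 a))
      ∂(Measure.pi fun _ => μ).prod (Measure.pi fun _ => ν)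
    _ = ∫ ζ : ι → E, (∫ x, Real.exp (sampleMean φ ζ x) ∂μ) ^ Fintype.card ι
        ∂Measure.pi (fun _ => ν) := by
      rw [integral_prod_symm _ (integrable_exp_sum_sampleMean hφ hφF hF)]
      simp_rw [integral_exp_sum_sampleMean_eq]
    _ ≤ ∫ ζ : ι → E, 1 - κ + ∫ x, Q ζ x ∂μ ∂Measure.pi (fun _ => ν) := by
      refine integral_mono_of_nonneg
        (ae_of_all _ fun ζ => pow_nonneg (integral_nonneg fun _ => (Real.exp_pos _).le) _)
        ((integrable_const _).add hQ) (ae_of_all _ fun ζ => ?_)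
      have hm := (measurable_sampleMean hφ).comp (measurable_prodMk_left (x := ζ))
      exact integral_exp_pow_le hm.aemeasurable (abs_sampleMean_le hφF ζ) hF
        (integral_sampleMean_eq_zero hφi hφ1 ζ) hr0 hFr _
    _ = 1 - κ + ∫ ζ, ∫ x, Q ζ x ∂μ ∂Measure.pi (fun _ => ν) := by
      rw [integral_add (integrable_const _) hQ]
      simp
    _ ≤ 1 - κ + κ * L := by
      gcongr
      exact integral_integral_remainderWeight_mul_exp_le hφ hφF hF hφ2 hr0.le hr
    _ ≤ L := by nlinarith

end TwoSample

section UStatistics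

open ProbabilityTheory

lemma card_embedding_nsmul_sum_perm {ι M : Type*} [Fintype ι] [DecidableEq ι] [AddCommMonoid M]
    {n : ℕ} (f : (Fin n ↪ ι) → M) (e : Fin n ↪ ι) :
    Fintype.card (Fin n ↪ ι) • ∑ σ : Equiv.Perm ι, f (e.trans σ.toEmbedding) =
      Fintype.card (Equiv.Perm ι) • ∑ e', f e' := by
  have sum_perm_eq (e' : Fin n ↪ ι) :
      ∑ σ : Equiv.Perm ι, f (e'.trans σ.toEmbedding) =
        ∑ σ : Equiv.Perm ι, f (e.trans σ.toEmbedding) := by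
    obtain ⟨τ, rfl⟩ := MulAction.isMultiplyPretransitive_iff.1
      (Equiv.Perm.isMultiplyPretransitive ι n) e e'
    exact Fintype.sum_equiv (Equiv.mulRight τ) _ _ fun σ => rfl
  have sum_embedding_eq (σ : Equiv.Perm ι) :
      ∑ e' : Fin n ↪ ι, f (e'.trans σ.toEmbedding) = ∑ e', f e' :=
    Fintype.sum_equiv (MulAction.toPerm σ) _ _ fun e' => rfl
  calc Fintype.card (Fin n ↪ ι) • ∑ σ : Equiv.Perm ι, f (e.trans σ.toEmbedding)
    _ = ∑ e' : Fin n ↪ ι, ∑ σ : Equiv.Perm ι, f (e'.trans σ.toEmbedding) := by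
      simp only [sum_perm_eq, Finset.sum_const, Finset.card_univ]
    _ = Fintype.card (Equiv.Perm ι) • ∑ e', f e' := by
      rw [Finset.sum_comm]
      simp_rw [sum_embedding_eq, Finset.sum_const, Finset.card_univ]

lemma measurePreserving_comp_of_injective {Ω ι κ : Type*} [MeasurableSpace Ω] (μ : Measure Ω)
    [IsProbabilityMeasure μ] [Fintype ι] [Fintype κ] {g : κ → ι} (hg : g.Injective) :
    MeasurePreserving (fun x : ι → Ω => x ∘ g) (Measure.pi fun _ => μ) (Measure.pi fun _ => μ) := by
  refine ⟨by fun_prop, ?_⟩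
  have hindep : iIndepFun (fun k (x : ι → Ω) => x (g k)) (Measure.pi fun _ => μ) :=
    (iIndepFun_pi (μ := fun _ : ι => μ) (X := fun _ => id) fun _ => aemeasurable_id).precomp hg
  have hmap := (iIndepFun_iff_map_fun_eq_pi_map fun k =>
    (measurable_pi_apply (g k)).aemeasurable).1 hindep
  simp_rw [fun k => (measurePreserving_eval (fun _ : ι => μ) (g k)).map_eq] at hmap
  exact hmap

variable {Ω ι κ : Type*}

/-- The two samples read off `x` along three disjoint copies of `κ` inside `ι`: the first copy
gives a sample of points, the other two a sample of pairs. -/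
def blockSamples (g : κ ⊕ κ ⊕ κ ↪ ι) (x : ι → Ω) : (κ → Ω) × (κ → Ω × Ω) :=
  (fun a => x (g (.inl a)), fun b => (x (g (.inr (.inl b))), x (g (.inr (.inr b)))))

/-- The triple of indices made of one index of the first block and one pair of the others. -/
def blockTriple (g : κ ⊕ κ ⊕ κ ↪ ι) (a b : κ) : Fin 3 ↪ ι where
  toFun := g ∘ ![.inl a, .inr (.inl b), .inr (.inr b)]
  inj' := g.injective.comp fun i j h => by fin_cases i <;> fin_cases j <;> simp_all

lemma measurePreserving_blockSamples [MeasurableSpace Ω] (μ : Measure Ω) [IsProbabilityMeasure μ]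
    [Fintype ι] [Fintype κ] (g : κ ⊕ κ ⊕ κ ↪ ι) :
    MeasurePreserving (blockSamples (Ω := Ω) g) (Measure.pi fun _ => μ)
      ((Measure.pi fun _ => μ).prod (Measure.pi fun _ => μ.prod μ)) := by
  have hsplit := measurePreserving_sumPiEquivProdPi (X := fun _ : κ ⊕ κ ⊕ κ => Ω) fun _ => μ
  have hpairs := (measurePreserving_arrowProdEquivProdArrow Ω Ω κ (fun _ => μ) fun _ => μ).symm.comp
    (measurePreserving_sumPiEquivProdPi (X := fun _ : κ ⊕ κ => Ω) fun _ => μ)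
  exact ((MeasurePreserving.id _).prod hpairs).comp
    (hsplit.comp (measurePreserving_comp_of_injective μ g.injective))

variable [Fintype ι] [Fintype κ] [Nonempty κ]

lemma card_mul_sum_embedding_div_eq [DecidableEq ι] (φ : Ω → Ω × Ω → ℝ) (g : κ ⊕ κ ⊕ κ ↪ ι)
    (x : ι → Ω) :
    Fintype.card κ * ((∑ e : Fin 3 ↪ ι, φ (x (e 0)) (x (e 1), x (e 2))) /
        Fintype.card (Fin 3 ↪ ι)) =
      ∑ σ : Equiv.Perm ι, (Fintype.card (Equiv.Perm ι) : ℝ)⁻¹ *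
        ∑ a, sampleMean φ (blockSamples (g.trans σ.toEmbedding) x).2
          ((blockSamples (g.trans σ.toEmbedding) x).1 a) := by
  set U := ∑ e : Fin 3 ↪ ι, φ (x (e 0)) (x (e 1), x (e 2))
  obtain ⟨k⟩ := ‹Nonempty κ›
  have hκ : (Fintype.card κ : ℝ) ≠ 0 := by exact_mod_cast Fintype.card_ne_zero
  have hP : (Fintype.card (Equiv.Perm ι) : ℝ) ≠ 0 := by exact_mod_cast Fintype.card_ne_zero
  have : Nonempty (Fin 3 ↪ ι) := ⟨blockTriple g k k⟩
  have hc : (Fintype.card (Fin 3 ↪ ι) : ℝ) ≠ 0 := by exact_mod_cast Fintype.card_ne_zero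
  have hterm (a b : κ) : ∑ σ : Equiv.Perm ι,
      φ ((blockSamples (g.trans σ.toEmbedding) x).1 a)
        ((blockSamples (g.trans σ.toEmbedding) x).2 b) =
      Fintype.card (Equiv.Perm ι) * U / Fintype.card (Fin 3 ↪ ι) := by
    rw [eq_div_iff hc, mul_comm]
    have h := card_embedding_nsmul_sum_perm
      (fun e => φ (x (e 0)) (x (e 1), x (e 2))) (blockTriple g a b)
    rw [nsmul_eq_mul, nsmul_eq_mul] at h
    exact h
  simp_rw [← Finset.mul_sum, sampleMean, ← Finset.mul_sum]
  rw [Finset.sum_comm]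
  simp_rw [Finset.sum_comm (s := (Finset.univ : Finset (Equiv.Perm ι))), hterm]
  simp only [Finset.sum_const, Finset.card_univ, nsmul_eq_mul]
  field_simp

lemma exp_card_mul_sum_embedding_div_le [DecidableEq ι] (φ : Ω → Ω × Ω → ℝ) (g : κ ⊕ κ ⊕ κ ↪ ι)
    (x : ι → Ω) :
    Real.exp (Fintype.card κ * ((∑ e : Fin 3 ↪ ι, φ (x (e 0)) (x (e 1), x (e 2))) /
        Fintype.card (Fin 3 ↪ ι))) ≤
      ∑ σ : Equiv.Perm ι, (Fintype.card (Equiv.Perm ι) : ℝ)⁻¹ *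
        Real.exp (∑ a, sampleMean φ (blockSamples (g.trans σ.toEmbedding) x).2
          ((blockSamples (g.trans σ.toEmbedding) x).1 a)) := by
  rw [card_mul_sum_embedding_div_eq φ g x]
  exact convexOn_exp.map_sum_le (fun _ _ => by positivity) (by simp) fun _ _ => Set.mem_univ _

variable [MeasurableSpace Ω] {μ : Measure Ω} [IsProbabilityMeasure μ] {φ : Ω → Ω × Ω → ℝ}
  {F : Ω → ℝ}

lemma integrable_exp_sum_blockSamples (g : κ ⊕ κ ⊕ κ ↪ ι) (hφ : Measurable (Function.uncurry φ))
    (hφF : ∀ x p, |φ x p| ≤ F x) (hF : Integrable (fun x => Real.exp (F x)) μ) :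
    Integrable (fun x : ι → Ω =>
      Real.exp (∑ a, sampleMean φ (blockSamples g x).2 ((blockSamples g x).1 a)))
      (Measure.pi fun _ => μ) :=
  (measurePreserving_blockSamples μ g).integrable_comp_of_integrable
    (integrable_exp_sum_sampleMean hφ hφF hF)

lemma integrable_exp_card_mul_sum_embedding_div (g : κ ⊕ κ ⊕ κ ↪ ι)
    (hφ : Measurable (Function.uncurry φ)) (hφF : ∀ x p, |φ x p| ≤ F x)
    (hF : Integrable (fun x => Real.exp (F x)) μ) :
    Integrable (fun x : ι → Ω => Real.exp (Fintype.card κ *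
      ((∑ e : Fin 3 ↪ ι, φ (x (e 0)) (x (e 1), x (e 2))) / Fintype.card (Fin 3 ↪ ι))))
      (Measure.pi fun _ => μ) := by
  classical
  have hterm (e : Fin 3 ↪ ι) : Measurable fun x : ι → Ω => φ (x (e 0)) (x (e 1), x (e 2)) :=
    hφ.comp (by fun_prop : Measurable fun x : ι → Ω => (x (e 0), x (e 1), x (e 2)))
  have hmeas := ((Finset.measurable_sum Finset.univ fun e _ => hterm e).div_const
    (Fintype.card (Fin 3 ↪ ι) : ℝ)).const_mul (Fintype.card κ : ℝ)
  refine (integrable_finsetSum Finset.univ fun σ : Equiv.Perm ι => fun _ =>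
    (integrable_exp_sum_blockSamples (g.trans σ.toEmbedding) hφ hφF hF).const_mul
      (Fintype.card (Equiv.Perm ι) : ℝ)⁻¹).mono' hmeas.exp.aestronglyMeasurable
    (ae_of_all _ fun x => ?_)
  rw [Real.norm_of_nonneg (Real.exp_pos _).le]
  exact exp_card_mul_sum_embedding_div_le φ g x

lemma integral_exp_card_mul_sum_embedding_div_le (g : κ ⊕ κ ⊕ κ ↪ ι)
    (hφ : Measurable (Function.uncurry φ)) (hφF : ∀ x p, |φ x p| ≤ F x)
    (hF : Integrable (fun x => Real.exp (F x)) μ) (hφ1 : ∀ p, ∫ x, φ x p ∂μ = 0)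
    (hφ2 : ∀ x, ∫ p, φ x p ∂μ.prod μ = 0) {r : ℝ} (hr0 : 0 < r) (hr : 2 * r < 1)
    (hFr : ∫ x, (Real.exp (F x) - 1 - F x) ∂μ ≤ r) :
    ∫ x : ι → Ω, Real.exp (Fintype.card κ *
        ((∑ e : Fin 3 ↪ ι, φ (x (e 0)) (x (e 1), x (e 2))) / Fintype.card (Fin 3 ↪ ι)))
      ∂Measure.pi (fun _ => μ) ≤ (√(1 - 2 * r))⁻¹ := by
  classical
  set B : (κ → Ω) × (κ → Ω × Ω) → ℝ := fun q => ∑ a, sampleMean φ q.2 (q.1 a)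
  set P : ℝ := (Fintype.card (Equiv.Perm ι) : ℝ)⁻¹ with hP
  have hint (σ : Equiv.Perm ι) :=
    (integrable_exp_sum_blockSamples (g.trans σ.toEmbedding) hφ hφF hF).const_mul P
  have hblock (σ : Equiv.Perm ι) :
      ∫ x : ι → Ω, Real.exp (B (blockSamples (g.trans σ.toEmbedding) x))
        ∂Measure.pi (fun _ => μ) ≤ (√(1 - 2 * r))⁻¹ := by
    have hmp := measurePreserving_blockSamples μ (g.trans σ.toEmbedding)
    refine le_of_eq_of_le ?_
      (integral_exp_sum_sampleMean_le (ι := κ) hφ hφF hF hφ1 hφ2 hr0 hr hFr)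
    rw [← hmp.map_eq, integral_map hmp.aemeasurable (hmp.map_eq.symm ▸
      (integrable_exp_sum_sampleMean hφ hφF hF).aestronglyMeasurable)]
  calc _
    _ ≤ ∫ x : ι → Ω, ∑ σ : Equiv.Perm ι,
        P * Real.exp (B (blockSamples (g.trans σ.toEmbedding) x)) ∂Measure.pi (fun _ => μ) :=
      integral_mono (integrable_exp_card_mul_sum_embedding_div g hφ hφF hF)
        (integrable_finsetSum _ fun σ _ => hint σ) (exp_card_mul_sum_embedding_div_le φ g)
    _ = ∑ σ : Equiv.Perm ι, P * ∫ x : ι → Ω,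
        Real.exp (B (blockSamples (g.trans σ.toEmbedding) x)) ∂Measure.pi (fun _ => μ) := by
      rw [integral_finsetSum _ fun σ _ => hint σ]
      simp_rw [integral_const_mul, B]
    _ ≤ ∑ _σ : Equiv.Perm ι, P * (√(1 - 2 * r))⁻¹ := by
      gcongr with σ
      exact hblock σ
    _ = (√(1 - 2 * r))⁻¹ := by simp [hP]

lemma integral_exp_mul_sum_embedding_le (g : κ ⊕ κ ⊕ κ ↪ ι)
    (hφ : Measurable (Function.uncurry φ)) (hφF : ∀ x p, |φ x p| ≤ F x) {s b : ℝ} (hs0 : 0 ≤ s)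
    (hs : s * Fintype.card (Fin 3 ↪ ι) ≤ b * Fintype.card κ)
    (hF : Integrable (fun x => Real.exp (b * F x)) μ) (hφ1 : ∀ p, ∫ x, φ x p ∂μ = 0)
    (hφ2 : ∀ x, ∫ p, φ x p ∂μ.prod μ = 0) {r : ℝ} (hr0 : 0 < r) (hr : 2 * r < 1)
    (hFr : ∫ x, (Real.exp (b * F x) - 1 - b * F x) ∂μ ≤ r) :
    Integrable (fun x : ι → Ω => Real.exp (s * ∑ e : Fin 3 ↪ ι, φ (x (e 0)) (x (e 1), x (e 2))))
      (Measure.pi fun _ => μ) ∧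
    ∫ x : ι → Ω, Real.exp (s * ∑ e : Fin 3 ↪ ι, φ (x (e 0)) (x (e 1), x (e 2)))
      ∂Measure.pi (fun _ => μ) ≤ (√(1 - 2 * r))⁻¹ := by
  have hκ : (0 : ℝ) < Fintype.card κ := Nat.cast_pos.2 Fintype.card_pos
  have : Nonempty (Fin 3 ↪ ι) := ‹Nonempty κ›.map fun k => blockTriple g k k
  have : (0 : ℝ) < Fintype.card (Fin 3 ↪ ι) := Nat.cast_pos.2 Fintype.card_pos
  obtain ⟨t, ht⟩ : ∃ t, t = s * Fintype.card (Fin 3 ↪ ι) / Fintype.card κ := ⟨_, rfl⟩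
  have ht0 : 0 ≤ t := ht ▸ by positivity
  have htb : t ≤ b := ht ▸ (div_le_iff₀ hκ).2 hs
  have htφF (x : Ω) (p : Ω × Ω) : |t * φ x p| ≤ b * F x := by
    rw [abs_mul, abs_of_nonneg ht0]
    exact mul_le_mul htb (hφF x p) (abs_nonneg _) (ht0.trans htb)
  have hscale (x : ι → Ω) : s * ∑ e : Fin 3 ↪ ι, φ (x (e 0)) (x (e 1), x (e 2)) =
      Fintype.card κ * ((∑ e : Fin 3 ↪ ι, t * φ (x (e 0)) (x (e 1), x (e 2))) /
        Fintype.card (Fin 3 ↪ ι)) := by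
    rw [← Finset.mul_sum, ht]
    field_simp
  have htφ : Measurable (Function.uncurry fun x p => t * φ x p) := hφ.const_mul t
  have htφ1 (p : Ω × Ω) : ∫ x, t * φ x p ∂μ = 0 := by rw [integral_const_mul, hφ1, mul_zero]
  have htφ2 (x : Ω) : ∫ p, t * φ x p ∂μ.prod μ = 0 := by
    rw [integral_const_mul, hφ2, mul_zero]
  have hint := integrable_exp_card_mul_sum_embedding_div g htφ htφF hF
  have hle := integral_exp_card_mul_sum_embedding_div_le g htφ htφF hF htφ1 htφ2 hr0 hr hFr
  simp only [← hscale] at hint hle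
  exact ⟨hint, hle⟩

end UStatistics

section TripleSums

lemma sum_embedding_fin_three {ι M : Type*} [Fintype ι] [DecidableEq ι] [AddCommMonoid M]
    (f : ι → ι → ι → M) :
    ∑ e : Fin 3 ↪ ι, f (e 0) (e 1) (e 2) =
      ∑ i, ∑ j, ∑ k, if i ≠ j ∧ i ≠ k ∧ j ≠ k then f i j k else 0 := by
  simp only [← Fintype.sum_prod_type']
  rw [← Finset.sum_filter]
  refine Finset.sum_bij (fun e _ => ((e 0, e 1, e 2) : ι × ι × ι)) ?_ ?_ ?_ fun _ _ => rfl
  · simp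
  · intro e _ e' _ h
    simp only [Prod.mk.injEq] at h
    ext i
    fin_cases i
    exacts [h.1, h.2.1, h.2.2]
  · rintro ⟨i, j, k⟩ h
    simp only [Finset.mem_filter, Finset.mem_univ, true_and] at h
    refine ⟨⟨![i, j, k], fun a b hab => ?_⟩, Finset.mem_univ _, rfl⟩
    fin_cases a <;> fin_cases b <;> simp_all

lemma sum_le_sum_embedding_add {ι : Type*} [Fintype ι] {f : ι → ι → ι → ℝ} {F : ι → ℝ}
    (h : ∀ i j k, |f i j k| ≤ F i) :
    ∑ i, ∑ j, ∑ k, f i j k ≤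
      ∑ e : Fin 3 ↪ ι, f (e 0) (e 1) (e 2) + 3 * Fintype.card ι * ∑ i, F i := by
  classical
  have hterm (i j k : ι) : f i j k ≤ (if i ≠ j ∧ i ≠ k ∧ j ≠ k then f i j k else 0) +
      ((if i = j then F i else 0) + (if i = k then F i else 0) + (if j = k then F i else 0)) := by
    have hle := (le_abs_self _).trans (h i j k)
    have hnonneg := (abs_nonneg _).trans (h i j k)
    split_ifs <;> first | linarith | tauto
  have hdiag : ∑ i, ∑ j, ∑ k,
      ((if i = j then F i else 0) + (if i = k then F i else 0) + (if j = k then F i else 0)) =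
        3 * Fintype.card ι * ∑ i, F i := by
    simp only [Finset.sum_add_distrib, Finset.sum_const, Finset.sum_ite_eq,
      Finset.mem_univ, if_true, Finset.card_univ, nsmul_eq_mul, ← Finset.mul_sum]
    ring
  rw [sum_embedding_fin_three, ← hdiag]
  simp only [← Finset.sum_add_distrib]
  gcongr with i _ j _ k _
  exact hterm i j k

lemma exp_add_le_half_exp_two_mul_add (u v : ℝ) :
    Real.exp (u + v) ≤ (Real.exp (2 * u) + Real.exp (2 * v)) / 2 := by
  rw [Real.exp_add, two_mul, two_mul, Real.exp_add, Real.exp_add]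
  linarith [two_mul_le_add_sq (Real.exp u) (Real.exp v)]

lemma exp_inv_card_mul_sum_le {ι : Type*} [Fintype ι] [Nonempty ι] (a : ι → ℝ) :
    Real.exp ((Fintype.card ι : ℝ)⁻¹ * ∑ i, a i) ≤
      (Fintype.card ι : ℝ)⁻¹ * ∑ i, Real.exp (a i) := by
  have h := convexOn_exp.map_sum_le (t := Finset.univ)
    (w := fun _ : ι => (Fintype.card ι : ℝ)⁻¹) (p := a) (fun _ _ => by positivity) (by simp)
    fun _ _ => Set.mem_univ _
  simpa only [smul_eq_mul, ← Finset.mul_sum] using h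

lemma exp_sum_triple_le {ι : Type*} [Fintype ι] [Nonempty ι] {f : ι → ι → ι → ℝ} {F : ι → ℝ}
    (h : ∀ i j k, |f i j k| ≤ F i) :
    Real.exp (1 / (Fintype.card ι : ℝ) ^ 2 * ∑ i, ∑ j, ∑ k, f i j k) ≤
      (Real.exp (2 / (Fintype.card ι : ℝ) ^ 2 * ∑ e : Fin 3 ↪ ι, f (e 0) (e 1) (e 2)) +
        (Fintype.card ι : ℝ)⁻¹ * ∑ i, Real.exp (6 * F i)) / 2 := by
  set n := (Fintype.card ι : ℝ)
  have hn0 : 0 < n := Nat.cast_pos.2 Fintype.card_pos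
  set U := 1 / n ^ 2 * ∑ e : Fin 3 ↪ ι, f (e 0) (e 1) (e 2)
  set W := 3 * (n⁻¹ * ∑ i, F i)
  have hsplit : 1 / n ^ 2 * ∑ i, ∑ j, ∑ k, f i j k ≤ U + W := by
    calc 1 / n ^ 2 * ∑ i, ∑ j, ∑ k, f i j k
      _ ≤ 1 / n ^ 2 * (∑ e : Fin 3 ↪ ι, f (e 0) (e 1) (e 2) + 3 * n * ∑ i, F i) := by
        gcongr
        exact sum_le_sum_embedding_add h
      _ = U + W := by
        simp only [U, W]
        field_simp
  have hdiag : Real.exp (2 * W) ≤ n⁻¹ * ∑ i, Real.exp (6 * F i) := by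
    refine le_of_eq_of_le (congrArg Real.exp ?_) (exp_inv_card_mul_sum_le fun i => 6 * F i)
    rw [← Finset.mul_sum]
    ring
  calc Real.exp (1 / n ^ 2 * ∑ i, ∑ j, ∑ k, f i j k)
    _ ≤ Real.exp (U + W) := Real.exp_le_exp.2 hsplit
    _ ≤ (Real.exp (2 * U) + Real.exp (2 * W)) / 2 := exp_add_le_half_exp_two_mul_add U W
    _ ≤ (Real.exp (2 * U) + n⁻¹ * ∑ i, Real.exp (6 * F i)) / 2 := by gcongr
    _ = _ := by
      simp only [U]
      ring_nf

lemma card_embedding_fin_three_le (N : ℕ) :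
    Fintype.card (Fin 3 ↪ Fin N) ≤ 3 * (N / 3) * N ^ 2 := by
  rw [Fintype.card_embedding_eq, Fintype.card_fin, Fintype.card_fin]
  calc N.descFactorial 3
    _ = (N - 2) * ((N - 1) * N) := by simp [Nat.descFactorial]
    _ ≤ 3 * (N / 3) * (N * N) := by
      gcongr
      · omega
      · omega
    _ = 3 * (N / 3) * N ^ 2 := by rw [sq]

variable {Ω : Type*} [MeasurableSpace Ω] {μ : Measure Ω} [IsProbabilityMeasure μ]

lemma integrable_mean_eval {ι : Type*} [Fintype ι] {f : Ω → ℝ} (hf : Integrable f μ) :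
    Integrable (fun x : ι → Ω => (Fintype.card ι : ℝ)⁻¹ * ∑ i, f (x i))
      (Measure.pi fun _ => μ) :=
  (integrable_finsetSum _ fun _ _ => integrable_comp_eval hf).const_mul _

lemma integral_mean_eval {ι : Type*} [Fintype ι] [Nonempty ι] {f : Ω → ℝ} (hf : Integrable f μ) :
    ∫ x : ι → Ω, (Fintype.card ι : ℝ)⁻¹ * ∑ i, f (x i) ∂Measure.pi (fun _ => μ) =
      ∫ x, f x ∂μ := by
  rw [integral_const_mul, integral_finsetSum _ fun _ _ => integrable_comp_eval hf]
  simp_rw [fun i : ι => integral_comp_eval (μ := fun _ : ι => μ) (i := i) hf.aestronglyMeasurable]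
  simp

variable {N : ℕ} {φ : Ω → Ω × Ω → ℝ} {F : Ω → ℝ}

lemma integral_exp_two_div_sq_mul_sum_embedding_le (hφ : Measurable (Function.uncurry φ))
    (hφF : ∀ x p, |φ x p| ≤ F x) (hF : Integrable (fun x => Real.exp (6 * F x)) μ)
    (hφ1 : ∀ p, ∫ x, φ x p ∂μ = 0) (hφ2 : ∀ x, ∫ p, φ x p ∂μ.prod μ = 0)
    (hF6 : ∫ x, (Real.exp (6 * F x) - 1 - 6 * F x) ∂μ ≤ 3 / 8) :
    Integrable (fun x : Fin N → Ω => Real.exp (2 / (N : ℝ) ^ 2 *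
      ∑ e : Fin 3 ↪ Fin N, φ (x (e 0)) (x (e 1), x (e 2)))) (Measure.pi fun _ => μ) ∧
    ∫ x : Fin N → Ω, Real.exp (2 / (N : ℝ) ^ 2 *
      ∑ e : Fin 3 ↪ Fin N, φ (x (e 0)) (x (e 1), x (e 2))) ∂Measure.pi (fun _ => μ) ≤ 2 := by
  obtain hN | hN := lt_or_ge N 3
  · have : IsEmpty (Fin 3 ↪ Fin N) := Function.Embedding.isEmpty_of_card_lt (by simpa using hN)
    simp
  have : NeZero (N / 3) := ⟨by omega⟩
  have : (0 : ℝ) < N := Nat.cast_pos.2 (by omega)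
  obtain ⟨g⟩ : Nonempty (Fin (N / 3) ⊕ Fin (N / 3) ⊕ Fin (N / 3) ↪ Fin N) :=
    Function.Embedding.nonempty_of_card_le <| by
      simp only [Fintype.card_sum, Fintype.card_fin]
      omega
  have hcoeff : 2 / (N : ℝ) ^ 2 * Fintype.card (Fin 3 ↪ Fin N) ≤
      6 * Fintype.card (Fin (N / 3)) := by
    have hcard : (Fintype.card (Fin 3 ↪ Fin N) : ℝ) ≤ 3 * (N / 3 : ℕ) * (N : ℝ) ^ 2 :=
      mod_cast card_embedding_fin_three_le N
    rw [Fintype.card_fin, div_mul_eq_mul_div, div_le_iff₀ (by positivity)]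
    linarith
  have hsqrt : (√(1 - 2 * (3 / 8)))⁻¹ = 2 := by
    rw [show (1 - 2 * (3 / 8) : ℝ) = (1 / 2) ^ 2 by norm_num, Real.sqrt_sq (by norm_num)]
    norm_num
  have hint := integral_exp_mul_sum_embedding_le g hφ hφF (by positivity) hcoeff hF hφ1 hφ2
    (by norm_num) (by norm_num) hF6
  exact ⟨hint.1, hint.2.trans_eq hsqrt⟩

lemma integral_exp_sum_triple_le_two (hN : 0 < N) (hφ : Measurable (Function.uncurry φ))
    (hφF : ∀ x p, |φ x p| ≤ F x) (hF : Integrable (fun x => Real.exp (6 * F x)) μ)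
    (hφ1 : ∀ p, ∫ x, φ x p ∂μ = 0) (hφ2 : ∀ x, ∫ p, φ x p ∂μ.prod μ = 0)
    (hF6 : ∫ x, (Real.exp (6 * F x) - 1 - 6 * F x) ∂μ ≤ 3 / 8)
    (hF2 : ∫ x, Real.exp (6 * F x) ∂μ ≤ 2) :
    ∫ x : Fin N → Ω, Real.exp (1 / (N : ℝ) ^ 2 * ∑ i, ∑ j, ∑ k, φ (x i) (x j, x k))
      ∂Measure.pi (fun _ => μ) ≤ 2 := by
  have : NeZero N := ⟨hN.ne'⟩
  obtain ⟨hUi, hU⟩ := integral_exp_two_div_sq_mul_sum_embedding_le (N := N) hφ hφF hF hφ1 hφ2 hF6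
  have hV := integral_mean_eval (ι := Fin N) hF
  have hVi := integrable_mean_eval (ι := Fin N) hF
  refine (integral_mono_of_nonneg (ae_of_all _ fun x => (Real.exp_pos _).le)
    ((hUi.add hVi).div_const 2) (ae_of_all _ fun x => ?_)).trans ?_
  · simpa only [Fintype.card_fin, Pi.add_apply] using
      exp_sum_triple_le (f := fun i j k => φ (x i) (x j, x k)) fun i _ _ => hφF (x i) _
  simp only [Pi.add_apply]
  rw [integral_div, integral_add hUi hVi, hV]
  linarith

end TripleSums

section Moments

variable {Ω : Type*} [MeasurableSpace Ω] {μ : Measure Ω} {F : Ω → ℝ} {s : ℝ}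

lemma integral_mul_pow_div_factorial_le (hs0 : 0 ≤ s) {t : ℝ} (ht0 : 0 ≤ t) {k : ℕ}
    (hk : ∫ x, F x ^ k ∂μ ≤ (k * s) ^ k) :
    ∫ x, (t * F x) ^ k / k.factorial ∂μ ≤ (Real.exp 1 * t * s) ^ k := by
  have hfact : (k : ℝ) ^ k / k.factorial ≤ Real.exp 1 ^ k := by
    rw [← Real.exp_nat_mul, mul_one]
    exact Real.pow_div_factorial_le_exp (k : ℝ) (by positivity) k
  calc ∫ x, (t * F x) ^ k / k.factorial ∂μ
    _ = t ^ k / k.factorial * ∫ x, F x ^ k ∂μ := by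
      rw [← integral_const_mul]
      congr with x
      ring
    _ ≤ t ^ k / k.factorial * (k * s) ^ k := by gcongr
    _ = t ^ k * s ^ k * (k ^ k / k.factorial) := by ring
    _ ≤ t ^ k * s ^ k * Real.exp 1 ^ k := by gcongr
    _ = (Real.exp 1 * t * s) ^ k := by ring

lemma integral_exp_sub_one_sub_le (hF0 : ∀ x, 0 ≤ F x)
    (hF : ∀ k, 2 ≤ k → Integrable (fun x => F x ^ k) μ) (hs0 : 0 ≤ s)
    (hmom : ∀ k : ℕ, 2 ≤ k → ∫ x, F x ^ k ∂μ ≤ (k * s) ^ k) {t : ℝ} (ht0 : 0 ≤ t)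
    (hts : Real.exp 1 * t * s < 1) :
    ∫ x, (Real.exp (t * F x) - 1 - t * F x) ∂μ ≤
      (Real.exp 1 * t * s) ^ 2 / (1 - Real.exp 1 * t * s) := by
  set θ := Real.exp 1 * t * s
  have hθ0 : 0 ≤ θ := by positivity
  set a : ℕ → Ω → ℝ := fun k x => (t * F x) ^ (k + 2) / (k + 2).factorial
  have ha0 (k : ℕ) (x : Ω) : 0 ≤ a k x := by
    have := hF0 x
    positivity
  have hai (k : ℕ) : Integrable (a k) μ := by
    simp only [a, mul_pow]
    exact ((hF (k + 2) (by omega)).const_mul _).div_const _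
  have hale (k : ℕ) : ∫ x, a k x ∂μ ≤ θ ^ 2 * θ ^ k :=
    (integral_mul_pow_div_factorial_le hs0 ht0 (hmom (k + 2) (by omega))).trans_eq (by ring)
  have hgeom : HasSum (fun k : ℕ => θ ^ 2 * θ ^ k) (θ ^ 2 / (1 - θ)) :=
    (hasSum_geometric_of_lt_one hθ0 hts).mul_left _
  have hsum : Summable fun k => ∫ x, ‖a k x‖ ∂μ := by
    refine .of_nonneg_of_le (fun k => integral_nonneg fun x => norm_nonneg _) (fun k => ?_)
      hgeom.summable
    simp_rw [Real.norm_of_nonneg (ha0 k _)]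
    exact hale k
  have htsum := hasSum_integral_of_summable_integral_norm hai hsum
  simp_rw [a, (hasSum_exp_sub_one_sub _).tsum_eq] at htsum
  exact hasSum_le hale htsum hgeom

lemma exp_one_mul_six_mul_le (hs : s < 1 / (6 * Real.exp 1 ^ 2)) :
    Real.exp 1 * 6 * s ≤ 2 / 5 := by
  have he : 5 / 2 < Real.exp 1 := by linarith [Real.exp_one_gt_d9]
  have h : Real.exp 1 * (Real.exp 1 * 6 * s) < 1 := by
    rw [lt_div_iff₀ (by positivity)] at hs
    linarith
  nlinarith

lemma integral_exp_six_mul_sub_one_sub_le (hF0 : ∀ x, 0 ≤ F x)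
    (hF : ∀ k, 2 ≤ k → Integrable (fun x => F x ^ k) μ) (hs0 : 0 ≤ s)
    (hs : s < 1 / (6 * Real.exp 1 ^ 2))
    (hmom : ∀ k : ℕ, 2 ≤ k → ∫ x, F x ^ k ∂μ ≤ (k * s) ^ k) :
    ∫ x, (Real.exp (6 * F x) - 1 - 6 * F x) ∂μ ≤ 3 / 8 := by
  have hθ := exp_one_mul_six_mul_le hs
  have hθ0 : 0 ≤ Real.exp 1 * 6 * s := by positivity
  refine (integral_exp_sub_one_sub_le hF0 hF hs0 hmom (by norm_num) (by linarith)).trans ?_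
  rw [div_le_iff₀ (by linarith)]
  nlinarith

lemma integral_exp_six_mul_le_two [IsProbabilityMeasure μ] (hF : Integrable F μ)
    (hFexp : Integrable (fun x => Real.exp (6 * F x)) μ) (hs0 : 0 ≤ s)
    (hs : s < 1 / (6 * Real.exp 1 ^ 2)) (hFs : ∫ x, F x ∂μ ≤ s)
    (hF6 : ∫ x, (Real.exp (6 * F x) - 1 - 6 * F x) ∂μ ≤ 3 / 8) :
    ∫ x, Real.exp (6 * F x) ∂μ ≤ 2 := by
  have hsub : Integrable (fun x => Real.exp (6 * F x) - 1) μ := hFexp.sub (integrable_const 1)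
  rw [integral_sub hsub (hF.const_mul 6),
    integral_sub hFexp (integrable_const 1), integral_const_mul] at hF6
  have hconst : ∫ _, (1 : ℝ) ∂μ = 1 := by simp
  have hs6 : s * 6 ≤ 2 / 5 := by
    refine le_trans ?_ (exp_one_mul_six_mul_le hs)
    nlinarith [Real.add_one_le_exp 1]
  linarith

/-- The growth constant `sup_{p ≥ 1} ‖F‖_p / p` of the moments of a nonnegative function. -/
noncomputable def momentGrowth (μ : Measure Ω) (F : Ω → ℝ) : ℝ :=
  ⨆ p : {p : ℝ // 1 ≤ p}, (∫ x, F x ^ (p : ℝ) ∂μ) ^ (1 / (p : ℝ)) / p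

lemma momentGrowth_nonneg (hF0 : ∀ x, 0 ≤ F x) : 0 ≤ momentGrowth μ F :=
  Real.iSup_nonneg fun p => div_nonneg
    (Real.rpow_nonneg (integral_nonneg fun x => Real.rpow_nonneg (hF0 x) _) _)
    (zero_le_one.trans p.2)

variable [IsProbabilityMeasure μ] {C : ℝ}

lemma rpow_integral_rpow_le (hF0 : ∀ x, 0 ≤ F x) (hFC : ∀ x, F x ≤ C) {p : ℝ} (hp : 0 < p) :
    (∫ x, F x ^ p ∂μ) ^ (1 / p) ≤ C := by
  obtain ⟨x₀⟩ := nonempty_of_isProbabilityMeasure μ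
  have hC0 : 0 ≤ C := (hF0 x₀).trans (hFC x₀)
  rw [one_div, Real.rpow_inv_le_iff_of_pos
    (integral_nonneg fun x => Real.rpow_nonneg (hF0 x) _) hC0 hp]
  calc ∫ x, F x ^ p ∂μ
    _ ≤ ∫ _, C ^ p ∂μ := integral_mono_of_nonneg (ae_of_all _ fun x => Real.rpow_nonneg (hF0 x) p)
      (integrable_const _) (ae_of_all _ fun x => Real.rpow_le_rpow (hF0 x) (hFC x) hp.le)
    _ = C ^ p := by simp

lemma integral_pow_le_mul_momentGrowth_pow (hF0 : ∀ x, 0 ≤ F x) (hFC : ∀ x, F x ≤ C) {k : ℕ}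
    (hk : 1 ≤ k) : ∫ x, F x ^ k ∂μ ≤ (k * momentGrowth μ F) ^ k := by
  have hbdd : BddAbove (Set.range fun p : {p : ℝ // 1 ≤ p} =>
      (∫ x, F x ^ (p : ℝ) ∂μ) ^ (1 / (p : ℝ)) / p) := by
    refine ⟨C, Set.forall_mem_range.2 fun p => ?_⟩
    have hp : 0 < (p : ℝ) := zero_lt_one.trans_le p.2
    exact (div_le_self (Real.rpow_nonneg (integral_nonneg fun x => Real.rpow_nonneg (hF0 x) _) _)
      p.2).trans (rpow_integral_rpow_le hF0 hFC hp)
  have hk1 : (1 : ℝ) ≤ k := mod_cast hk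
  have hk0 : (0 : ℝ) < k := zero_lt_one.trans_le hk1
  have hle : (∫ x, F x ^ (k : ℝ) ∂μ) ^ (1 / (k : ℝ)) / k ≤ momentGrowth μ F :=
    le_ciSup hbdd ⟨k, hk1⟩
  have hG0 := momentGrowth_nonneg (μ := μ) hF0
  rw [div_le_iff₀' hk0, one_div, Real.rpow_inv_le_iff_of_pos
    (integral_nonneg fun x => Real.rpow_nonneg (hF0 x) _) (by positivity) hk0] at hle
  simpa only [Real.rpow_natCast] using hle

end Moments

section Densities

variable {Ω : Type*} [MeasurableSpace Ω] {ν : Measure Ω} {ρ : Ω → ℝ}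

lemma integral_withDensity_ofReal (hρ : Measurable ρ) (hρ0 : ∀ x, 0 ≤ ρ x) (g : Ω → ℝ) :
    ∫ x, g x ∂ν.withDensity (fun x => ENNReal.ofReal (ρ x)) = ∫ x, g x * ρ x ∂ν := by
  rw [integral_withDensity_eq_integral_toReal_smul (by fun_prop)
    (ae_of_all _ fun x => ENNReal.ofReal_lt_top)]
  congr with x
  rw [ENNReal.toReal_ofReal (hρ0 x), smul_eq_mul, mul_comm]

lemma isProbabilityMeasure_withDensity_ofReal (hρ0 : ∀ x, 0 ≤ ρ x) (hρ1 : ∫ x, ρ x ∂ν = 1) :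
    IsProbabilityMeasure (ν.withDensity fun x => ENNReal.ofReal (ρ x)) := by
  refine ⟨?_⟩
  rw [withDensity_apply _ MeasurableSet.univ, Measure.restrict_univ,
    ← ofReal_integral_eq_lintegral_ofReal (.of_integral_ne_zero (hρ1 ▸ one_ne_zero))
      (ae_of_all _ hρ0), hρ1, ENNReal.ofReal_one]

lemma pi_withDensity_ofReal {ι : Type*} [Fintype ι] [SigmaFinite ν] (hρ0 : ∀ x, 0 ≤ ρ x)
    (hρ : Integrable ρ ν) :
    Measure.pi (fun _ : ι => ν.withDensity fun x => ENNReal.ofReal (ρ x)) =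
      (Measure.pi fun _ => ν).withDensity fun x => ENNReal.ofReal (∏ i, ρ (x i)) := by
  have := isFiniteMeasure_withDensity_ofReal hρ.hasFiniteIntegral
  refine Measure.pi_eq fun S hS => ?_
  rw [withDensity_apply _ (MeasurableSet.univ_pi hS), Measure.restrict_pi_pi,
    ← ofReal_integral_eq_lintegral_ofReal
      (Integrable.fintype_prod (f := fun _ => ρ) fun _ => hρ.integrableOn)
      (ae_of_all _ fun x => Finset.prod_nonneg fun i _ => hρ0 _),
    integral_fintype_prod_eq_prod (fun _ => ρ),
    ENNReal.ofReal_prod_of_nonneg fun i _ => integral_nonneg hρ0]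
  refine Finset.prod_congr rfl fun i _ => ?_
  rw [withDensity_apply _ (hS i), ofReal_integral_eq_lintegral_ofReal hρ.integrableOn
    (ae_of_all _ hρ0)]

end Densities

section KernelSup

variable {Ω E E' : Type*} {φ : Ω → E → E' → ℝ} {C : ℝ}

/-- The envelope `x ↦ sup_{z,z'} |φ(x,z,z')|` of a kernel, taken pointwise, not essentially. -/
noncomputable def kernelSup (φ : Ω → E → E' → ℝ) (x : Ω) : ℝ :=
  ⨆ z, ⨆ z', |φ x z z'|

lemma kernelSup_nonneg (x : Ω) : 0 ≤ kernelSup φ x :=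
  Real.iSup_nonneg fun _ => Real.iSup_nonneg fun _ => abs_nonneg _

lemma bddAbove_range_abs_kernel (hφ : ∀ x z z', |φ x z z'| ≤ C) (x : Ω) :
    BddAbove (Set.range fun p : E × E' => |φ x p.1 p.2|) :=
  ⟨C, Set.forall_mem_range.2 fun _ => hφ _ _ _⟩

lemma kernelSup_eq_ciSup_prod (hφ : ∀ x z z', |φ x z z'| ≤ C) (x : Ω) :
    kernelSup φ x = ⨆ p : E × E', |φ x p.1 p.2| :=
  (ciSup_prod (bddAbove_range_abs_kernel hφ x)).symm

lemma abs_le_kernelSup (hφ : ∀ x z z', |φ x z z'| ≤ C) (x : Ω) (z : E) (z' : E') :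
    |φ x z z'| ≤ kernelSup φ x := by
  rw [kernelSup_eq_ciSup_prod hφ]
  exact le_ciSup (bddAbove_range_abs_kernel hφ x) (z, z')

lemma kernelSup_le [Nonempty E] [Nonempty E'] (hφ : ∀ x z z', |φ x z z'| ≤ C) (x : Ω) :
    kernelSup φ x ≤ C :=
  ciSup_le fun _ => ciSup_le fun _ => hφ _ _ _

lemma aemeasurable_kernelSup [MeasurableSpace Ω] [StandardBorelSpace Ω] [MeasurableSpace E]
    [StandardBorelSpace E] [Nonempty E] [MeasurableSpace E'] [StandardBorelSpace E'] [Nonempty E']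
    {μ : Measure Ω} [IsFiniteMeasure μ]
    (hφm : Measurable fun p : Ω × E × E' => φ p.1 p.2.1 p.2.2)
    (hφ : ∀ x z z', |φ x z z'| ≤ C) : AEMeasurable (kernelSup φ) μ := by
  simp_rw [funext (kernelSup_eq_ciSup_prod hφ)]
  exact aemeasurable_ciSup_of_measurable_uncurry μ hφm.abs (bddAbove_range_abs_kernel hφ)

end KernelSup

section LargeDeviation

variable {Ω : Type*} [MeasurableSpace Ω] [StandardBorelSpace Ω] {N : ℕ}
  {φ : Ω → Ω → Ω → ℝ} {C : ℝ}

lemma integral_exp_sum_triple_le_two_of_momentGrowth_lt {μ : Measure Ω} [IsProbabilityMeasure μ]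
    (hN : 0 < N) (hφm : Measurable fun p : Ω × Ω × Ω => φ p.1 p.2.1 p.2.2)
    (hφ : ∀ x z z', |φ x z z'| ≤ C) (hφ1 : ∀ z z', ∫ x, φ x z z' ∂μ = 0)
    (hφ2 : ∀ x, ∫ p, φ x p.1 p.2 ∂μ.prod μ = 0)
    (hS : momentGrowth μ (kernelSup φ) < 1 / (6 * Real.exp 1 ^ 2)) :
    ∫ x : Fin N → Ω, Real.exp (1 / (N : ℝ) ^ 2 * ∑ i, ∑ j, ∑ k, φ (x i) (x j) (x k))
      ∂Measure.pi (fun _ => μ) ≤ 2 := by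
  have : Nonempty Ω := nonempty_of_isProbabilityMeasure μ
  set F := kernelSup φ
  have hF : AEMeasurable F μ := aemeasurable_kernelSup hφm hφ
  have hF0 : ∀ x, 0 ≤ F x := kernelSup_nonneg
  have hFC : ∀ x, F x ≤ C := kernelSup_le hφ
  have hFpow (k : ℕ) : Integrable (fun x => F x ^ k) μ :=
    .of_bound (hF.pow_const k).aestronglyMeasurable (C ^ k) <| ae_of_all _ fun x => by
      rw [norm_pow, Real.norm_of_nonneg (hF0 x)]
      exact pow_le_pow_left₀ (hF0 x) (hFC x) k
  have hFexp : Integrable (fun x => Real.exp (6 * F x)) μ :=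
    .of_bound (hF.const_mul 6).exp.aestronglyMeasurable (Real.exp (6 * C)) <|
      ae_of_all _ fun x => by
        rw [Real.norm_of_nonneg (Real.exp_pos _).le, Real.exp_le_exp]
        exact mul_le_mul_of_nonneg_left (hFC x) (by norm_num)
  have hmom (k : ℕ) (hk : 1 ≤ k) := integral_pow_le_mul_momentGrowth_pow (μ := μ) hF0 hFC hk
  have hS0 : 0 ≤ momentGrowth μ F := momentGrowth_nonneg hF0
  have hF6 : ∫ x, (Real.exp (6 * F x) - 1 - 6 * F x) ∂μ ≤ 3 / 8 :=
    integral_exp_six_mul_sub_one_sub_le hF0 (fun k _ => hFpow k) hS0 hS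
      fun k hk => hmom k (one_le_two.trans hk)
  have hF2 : ∫ x, Real.exp (6 * F x) ∂μ ≤ 2 :=
    integral_exp_six_mul_le_two (by simpa using hFpow 1) hFexp hS0 hS
      (by simpa using hmom 1 le_rfl) hF6
  exact integral_exp_sum_triple_le_two (φ := fun x p => φ x p.1 p.2) hN hφm
    (fun x p => abs_le_kernelSup hφ x p.1 p.2) hFexp (fun p => hφ1 p.1 p.2) hφ2 hF6 hF2

theorem stmt17_general {ν : Measure Ω} [SigmaFinite ν] (hN : 0 < N) {ρ : Ω → ℝ}
    (hρ : Measurable ρ) (hρ0 : ∀ x, 0 ≤ ρ x) (hρ1 : ∫ x, ρ x ∂ν = 1)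
    (hφm : Measurable fun p : Ω × Ω × Ω => φ p.1 p.2.1 p.2.2) (hφ : ∀ x z z', |φ x z z'| ≤ C)
    (hcancel1 : ∀ z z', ∫ x, φ x z z' * ρ x ∂ν = 0)
    (hcancel2 : ∀ x, ∫ z, ∫ z', φ x z z' * (ρ z * ρ z') ∂ν ∂ν = 0)
    (hS : ⨆ p : {p : ℝ // 1 ≤ p},
      (∫ x, (⨆ z, ⨆ z', |φ x z z'|) ^ (p : ℝ) * ρ x ∂ν) ^ (1 / (p : ℝ)) / p <
        1 / (6 * Real.exp 1 ^ 2)) :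
    ∫ X : Fin N → Ω, Real.exp (1 / (N : ℝ) ^ 2 * ∑ i, ∑ j, ∑ k, φ (X i) (X j) (X k)) *
      ∏ s, ρ (X s) ∂Measure.pi (fun _ => ν) ≤ 2 := by
  set μ := ν.withDensity fun x => ENNReal.ofReal (ρ x) with hμ
  have hμρ (g : Ω → ℝ) : ∫ x, g x ∂μ = ∫ x, g x * ρ x ∂ν := integral_withDensity_ofReal hρ hρ0 g
  have hρi : Integrable ρ ν := .of_integral_ne_zero (hρ1 ▸ one_ne_zero)
  have : IsProbabilityMeasure μ := isProbabilityMeasure_withDensity_ofReal hρ0 hρ1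
  have hcancel2' (x : Ω) : ∫ p, φ x p.1 p.2 ∂μ.prod μ = 0 := by
    have hi : Integrable (fun p : Ω × Ω => φ x p.1 p.2) (μ.prod μ) :=
      .of_bound (hφm.comp measurable_prodMk_left).aestronglyMeasurable C
        (ae_of_all _ fun p => hφ _ _ _)
    rw [integral_prod _ hi, hμρ, ← hcancel2 x]
    congr with z
    rw [hμρ, ← integral_mul_const]
    congr with z'
    ring
  have hgrowth : momentGrowth μ (kernelSup φ) < 1 / (6 * Real.exp 1 ^ 2) := by
    simp_rw [momentGrowth, hμρ]
    exact hS
  have hle := integral_exp_sum_triple_le_two_of_momentGrowth_lt hN hφm hφ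
    (fun z z' => (hμρ _).trans (hcancel1 z z')) hcancel2' hgrowth
  rwa [hμ, pi_withDensity_ofReal hρ0 hρi, integral_withDensity_ofReal (by fun_prop)
    fun X => Finset.prod_nonneg fun s _ => hρ0 _] at hle

end LargeDeviation

lemma Msup_nonneg {d : ℕ} {ρ : Torus d → ℝ} (hρ0 : ∀ x, 0 ≤ ρ x)
    (φ : Torus d → Torus d → Torus d → ℝ) : 0 ≤ Msup ρ φ :=
  Real.iSup_nonneg fun p => div_nonneg (Real.rpow_nonneg (integral_nonneg fun x =>
    mul_nonneg (Real.rpow_nonneg (kernelSup_nonneg x) _) (hρ0 x)) _) (zero_le_one.trans p.2)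

lemma two_le_mul_one_add_add {a b : ℝ} (ha0 : 0 ≤ a) (ha : a < 1) (hb : b < 1) :
    2 ≤ 2 * (1 + 4 * a / (1 - a) ^ 3 + 1 / (1 - b)) := by
  have : 0 < 1 - a := sub_pos.2 ha
  have : 0 < 1 - b := sub_pos.2 hb
  have hα : 0 ≤ 4 * a / (1 - a) ^ 3 := by positivity
  have hβ : 0 ≤ 1 / (1 - b) := by positivity
  linarith

lemma exp_one_sq_mul_lt {s : ℝ} (hs : s < 1 / (6 * Real.exp 1 ^ 2)) :
    Real.exp 1 ^ 2 * s < 1 / 6 := by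
  rw [lt_div_iff₀ (by positivity)] at hs
  linarith

lemma sq_sqrt_mul_lt_one {s : ℝ} (hs0 : 0 ≤ s) (hs : s < 1 / (6 * Real.exp 1 ^ 2)) :
    (√(32 * Real.exp 1 ^ 3) * s) ^ 2 < 1 := by
  have he : 1 ≤ Real.exp 1 := Real.one_le_exp zero_le_one
  calc (√(32 * Real.exp 1 ^ 3) * s) ^ 2
    _ = 32 * Real.exp 1 ^ 3 * s ^ 2 := by rw [mul_pow, Real.sq_sqrt (by positivity)]
    _ ≤ 32 * Real.exp 1 ^ 4 * s ^ 2 := by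
      gcongr
      norm_num
    _ = 32 * (Real.exp 1 ^ 2 * s) ^ 2 := by ring
    _ < 1 := by
      have := exp_one_sq_mul_lt hs
      have : 0 ≤ Real.exp 1 ^ 2 * s := by positivity
      nlinarith

lemma sq_three_mul_exp_one_sq_mul_lt_one {s : ℝ} (hs0 : 0 ≤ s)
    (hs : s < 1 / (6 * Real.exp 1 ^ 2)) : (3 * Real.exp 1 ^ 2 * s) ^ 2 < 1 := by
  rw [mul_assoc]
  exact pow_lt_one₀ (by positivity) (by linarith [exp_one_sq_mul_lt hs]) two_ne_zero

/-- Theorem 1.8 (exponential law of large numbers / large deviation estimate):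
if `φ` satisfies both cancellations and `sup_{p≥1} M_p/p < 1/(6e²)`, then uniformly in `N`,
`∫ ρ̄^{⊗N} exp(N^{−2} ∑_{i,j,k} φ(x_i,x_j,x_k)) ≤ 2(1 + 4α/(1−α)³ + 1/(1−β))`
with `α = (√(32e³) sup M_p/p)² < 1` and `β = (3e² sup M_p/p)² < 1`. -/
theorem stmt17 {d N : ℕ} (hd : 0 < d) (hN : 0 < N)
    (ρ : Torus d → ℝ) (hρmeas : Measurable ρ) (hρ0 : ∀ x, 0 ≤ ρ x)
    (hρ1 : ∫ x : Torus d, ρ x = 1)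
    (φ : Torus d → Torus d → Torus d → ℝ)
    (hφmeas : Measurable fun p : Torus d × Torus d × Torus d => φ p.1 p.2.1 p.2.2)
    (C : ℝ) (hφbdd : ∀ x z z', |φ x z z'| ≤ C)
    (hcancel1 : ∀ z z', ∫ x : Torus d, φ x z z' * ρ x = 0)
    (hcancel2 : ∀ x, ∫ z : Torus d, ∫ z' : Torus d, φ x z z' * (ρ z * ρ z') = 0)
    (hS : Msup ρ φ < 1 / (6 * Real.exp 1 ^ 2)) :
    (Real.sqrt (32 * Real.exp 1 ^ 3) * Msup ρ φ) ^ 2 < 1 ∧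
    (3 * Real.exp 1 ^ 2 * Msup ρ φ) ^ 2 < 1 ∧
    ∫ X : Fin N → Torus d,
        Real.exp ((1 / (N : ℝ) ^ 2) * ∑ i : Fin N, ∑ j : Fin N, ∑ k : Fin N,
          φ (X i) (X j) (X k)) * ∏ s, ρ (X s)
      ≤ 2 * (1 + 4 * (Real.sqrt (32 * Real.exp 1 ^ 3) * Msup ρ φ) ^ 2 /
              (1 - (Real.sqrt (32 * Real.exp 1 ^ 3) * Msup ρ φ) ^ 2) ^ 3
            + 1 / (1 - (3 * Real.exp 1 ^ 2 * Msup ρ φ) ^ 2)) := by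
  have hs0 : 0 ≤ Msup ρ φ := Msup_nonneg hρ0 φ
  have hα := sq_sqrt_mul_lt_one hs0 hS
  have hβ := sq_three_mul_exp_one_sq_mul_lt_one hs0 hS
  exact ⟨hα, hβ, (stmt17_general hN hρmeas hρ0 hρ1 hφmeas hφbdd hcancel1 hcancel2 hS).trans
    (two_le_mul_one_add_add (sq_nonneg _) hα hβ)⟩
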